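/- On an open subset of ℝ³ with coordinates (x¹, x², x³) = (x, y, z), let the metric be given by g = (dz + β₁dx¹ + β₂dx²)² + h_{ab}dx^adx^b, i.e. g_{33} = 1, g_{a3} = g_{3a} = β_a and g_{ab} = h_{ab} + β_aβ_b for a,b ∈ {1,2}, where β₁, β₂ are smooth functions of (x¹,x²) only and (h_{ab}) is a smooth positive-definite 2×2 matrix-valued function with ∂_z det(h_{ab}) = 0. Let c ∈ ℝ and define the symmetric tensor field T^{ij} := c·(δ^i_z δ^j_z − (1/3)g^{ij}). Then T is trace-free, g_{ij}T^{ij} = 0, and T satisfies the momentum constraint ∇_j T^{ij} = 0. -/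

import Mathlib

open Matrix

noncomputable section

abbrev V3 := Fin 3 → ℝ

/-- Partial derivative `∂ᵢ f` on `ℝ³`. -/
def pd (i : Fin 3) (f : V3 → ℝ) (x : V3) : ℝ := fderiv ℝ f x (Pi.single i 1)

/-- Christoffel symbols `Γ^i_{jk} = (1/2) g^{il}(∂_j g_{lk} + ∂_k g_{jl} - ∂_l g_{jk})`. -/
def christoffel (g : V3 → Matrix (Fin 3) (Fin 3) ℝ) (i j k : Fin 3) (x : V3) : ℝ :=
  (1 / 2) * ∑ l, (g x)⁻¹ i l *
    (pd j (fun y => g y l k) x + pd k (fun y => g y j l) x - pd l (fun y => g y j k) x)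

/-- `|g| = (det g)^{1/2}`. -/
def sqrtDet (g : V3 → Matrix (Fin 3) (Fin 3) ℝ) (x : V3) : ℝ := Real.sqrt (g x).det

/-- Covariant divergence of a contravariant symmetric 2-tensor:
`∇_j T^{ij} = |g|⁻¹ ∂_j(|g| T^{ij}) + Γ^i_{jk} T^{jk}`. -/
def covDivUp (g T : V3 → Matrix (Fin 3) (Fin 3) ℝ) (i : Fin 3) (x : V3) : ℝ :=
  (sqrtDet g x)⁻¹ * (∑ j, pd j (fun y => sqrtDet g y * T y i j) x) +
    ∑ j, ∑ k, christoffel g i j k x * T x j k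

/-- Covariant divergence in mixed form, for a contravariant tensor `T^{ij}`:
`∇_j T_i^{ j} = |g|⁻¹ ∂_j(|g| g_{ik} T^{kj}) - (1/2) T^{jk} ∂_i g_{jk}`. -/
def covDivLow (g T : V3 → Matrix (Fin 3) (Fin 3) ℝ) (i : Fin 3) (x : V3) : ℝ :=
  (sqrtDet g x)⁻¹ * (∑ j, pd j (fun y => sqrtDet g y * (∑ k, g y i k * T y k j)) x) -
    (1 / 2) * ∑ j, ∑ k, T x j k * pd i (fun y => g y j k) x

open Filter Topology

lemma pd_congr {f f' : V3 → ℝ} {x : V3} (h : f =ᶠ[𝓝 x] f') (i : Fin 3) : pd i f x = pd i f' x := by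
  unfold pd; rw [h.fderiv_eq]

lemma pd_const' (i : Fin 3) (c : ℝ) (x : V3) : pd i (fun _ => c) x = 0 := by
  simp [pd]

lemma pd_add' {f f' : V3 → ℝ} {x : V3} (i : Fin 3) (h : DifferentiableAt ℝ f x)
    (h' : DifferentiableAt ℝ f' x) : pd i (fun y => f y + f' y) x = pd i f x + pd i f' x := by
  unfold pd; rw [fderiv_fun_add h h']; rfl

lemma pd_sub' {f f' : V3 → ℝ} {x : V3} (i : Fin 3) (h : DifferentiableAt ℝ f x)
    (h' : DifferentiableAt ℝ f' x) : pd i (fun y => f y - f' y) x = pd i f x - pd i f' x := by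
  unfold pd; rw [fderiv_fun_sub h h']; rfl

lemma pd_neg' {f : V3 → ℝ} {x : V3} (i : Fin 3) : pd i (fun y => - f y) x = - pd i f x := by
  unfold pd; rw [fderiv_fun_neg]; rfl

lemma pd_mul' {f f' : V3 → ℝ} {x : V3} (i : Fin 3) (h : DifferentiableAt ℝ f x)
    (h' : DifferentiableAt ℝ f' x) :
    pd i (fun y => f y * f' y) x = f x * pd i f' x + f' x * pd i f x := by
  unfold pd; rw [fderiv_fun_mul h h']; simp

lemma pd_inv' {f : V3 → ℝ} {x : V3} (i : Fin 3) (h : DifferentiableAt ℝ f x) (h0 : f x ≠ 0) :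
    pd i (fun y => (f y)⁻¹) x = - pd i f x / (f x) ^ 2 := by
  unfold pd
  have := (hasDerivAt_inv h0).comp_hasFDerivAt x h.hasFDerivAt
  have e : HasFDerivAt (fun y => (f y)⁻¹) _ x := this
  rw [e.fderiv]; simp; field_simp

lemma pd_sqrt' {f : V3 → ℝ} {x : V3} (i : Fin 3) (h : DifferentiableAt ℝ f x) (h0 : f x ≠ 0) :
    pd i (fun y => Real.sqrt (f y)) x = pd i f x / (2 * Real.sqrt (f x)) := by
  unfold pd
  rw [(h.hasFDerivAt.sqrt h0).fderiv]; simp; field_simp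

/-- The logarithmic-derivative form of the weighted derivative. -/
lemma pd_weight {D F : V3 → ℝ} {x : V3} (i : Fin 3) (hD : DifferentiableAt ℝ D x)
    (hF : DifferentiableAt ℝ F x) (h0 : 0 < D x) :
    (Real.sqrt (D x))⁻¹ * pd i (fun y => Real.sqrt (D y) * F y) x
      = pd i F x + F x * pd i D x / (2 * D x) := by
  rw [pd_mul' i (hD.sqrt h0.ne') hF, pd_sqrt' i hD h0.ne']
  have hs : 0 < Real.sqrt (D x) := Real.sqrt_pos.2 h0
  have h2 : Real.sqrt (D x) ^ 2 = D x := Real.sq_sqrt h0.le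
  rw [← h2]
  simp only [h2]
  field_simp
  try simp only [h2]
  try field_simp

lemma covDivUp_congr {g g' T T' : V3 → Matrix (Fin 3) (Fin 3) ℝ} {x : V3}
    (hg : g =ᶠ[𝓝 x] g') (hT : T =ᶠ[𝓝 x] T') (i : Fin 3) :
    covDivUp g T i x = covDivUp g' T' i x := by
  have e1 : ∀ j, pd j (fun y => sqrtDet g y * T y i j) x
      = pd j (fun y => sqrtDet g' y * T' y i j) x := fun j => by
    apply pd_congr
    filter_upwards [hg, hT] with y h1 h2
    simp only [sqrtDet, h1, h2]
  have e2 : ∀ j l k, pd j (fun y => g y l k) x = pd j (fun y => g' y l k) x := fun j l k => by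
    apply pd_congr
    filter_upwards [hg] with y h1
    rw [h1]
  simp only [covDivUp, christoffel, e1, e2, hT.eq_of_nhds, hg.eq_of_nhds]
  simp only [sqrtDet, hg.eq_of_nhds]

/-- The metric in terms of its scalar components. -/
def Gm (a b d p q : ℝ) : Matrix (Fin 3) (Fin 3) ℝ :=
  !![a + p * p, b + p * q, p; b + q * p, d + q * q, q; p, q, 1]

/-- The adjugate of `Gm`. -/
def Nm (a b d p q : ℝ) : Matrix (Fin 3) (Fin 3) ℝ :=
  !![d, -b, b * q - d * p; -b, a, b * p - a * q;
     b * q - d * p, b * p - a * q, (a * d - b * b) + (d * p * p - 2 * b * p * q + a * q * q)]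

lemma Gm_det (a b d p q : ℝ) : (Gm a b d p q).det = a * d - b * b := by
  simp [Gm, Matrix.det_fin_three]; ring

lemma Gm_inv (a b d p q : ℝ) (h : a * d - b * b ≠ 0) :
    (Gm a b d p q)⁻¹ = Matrix.of fun i j => (a * d - b * b)⁻¹ * Nm a b d p q i j := by
  apply Matrix.inv_eq_right_inv
  have h' : a * d - b ^ 2 ≠ 0 := by rwa [pow_two]
  ext i j
  fin_cases i <;> fin_cases j <;>
    simp [Gm, Nm, Matrix.mul_apply, Fin.sum_univ_three] <;> field_simp <;> ring

/-- Kronecker factor. -/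
def dl (i j : Fin 3) : ℝ := if i = 2 ∧ j = 2 then 1 else 0

/-- The tensor. -/
def Tm (c a b d p q : ℝ) : Matrix (Fin 3) (Fin 3) ℝ :=
  Matrix.of fun i j => c * (dl i j - (1 / 3) * ((a * d - b * b)⁻¹ * Nm a b d p q i j))

/-- derivative of `Gm` -/
def dGm (a b d p q a' b' d' p' q' : ℝ) : Matrix (Fin 3) (Fin 3) ℝ :=
  !![a' + 2 * p * p', b' + p * q' + q * p', p'; b' + p * q' + q * p', d' + 2 * q * q', q'; p', q', 0]

/-- derivative of `Nm` -/
def dNm (a b d p q a' b' d' p' q' : ℝ) : Matrix (Fin 3) (Fin 3) ℝ :=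
  !![d', -b', b' * q + b * q' - d' * p - d * p';
     -b', a', b' * p + b * p' - a' * q - a * q';
     b' * q + b * q' - d' * p - d * p', b' * p + b * p' - a' * q - a * q',
     (a' * d + a * d' - 2 * b * b') + (d' * p * p + 2 * d * p * p' - 2 * b' * p * q
       - 2 * b * p' * q - 2 * b * p * q' + a' * q * q + 2 * a * q * q')]

section
variable {a b d p q : V3 → ℝ} {x : V3}

lemma pd_Gm (ha : DifferentiableAt ℝ a x) (hb : DifferentiableAt ℝ b x)
    (hd : DifferentiableAt ℝ d x) (hp : DifferentiableAt ℝ p x) (hq : DifferentiableAt ℝ q x)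
    (j l k : Fin 3) :
    pd j (fun y => Gm (a y) (b y) (d y) (p y) (q y) l k) x =
      dGm (a x) (b x) (d x) (p x) (q x) (pd j a x) (pd j b x) (pd j d x) (pd j p x) (pd j q x) l k := by
  fin_cases l <;> fin_cases k <;> simp [Gm, dGm] <;>
    simp (disch := fun_prop) only [pd_add', pd_mul', pd_const'] <;> ring

lemma diff_Nm (ha : DifferentiableAt ℝ a x) (hb : DifferentiableAt ℝ b x)
    (hd : DifferentiableAt ℝ d x) (hp : DifferentiableAt ℝ p x) (hq : DifferentiableAt ℝ q x)
    (l k : Fin 3) :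
    DifferentiableAt ℝ (fun y => Nm (a y) (b y) (d y) (p y) (q y) l k) x := by
  fin_cases l <;> fin_cases k <;> simp [Nm] <;> fun_prop

lemma pd_Nm (ha : DifferentiableAt ℝ a x) (hb : DifferentiableAt ℝ b x)
    (hd : DifferentiableAt ℝ d x) (hp : DifferentiableAt ℝ p x) (hq : DifferentiableAt ℝ q x)
    (j l k : Fin 3) :
    pd j (fun y => Nm (a y) (b y) (d y) (p y) (q y) l k) x =
      dNm (a x) (b x) (d x) (p x) (q x) (pd j a x) (pd j b x) (pd j d x) (pd j p x) (pd j q x) l k := by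
  fin_cases l <;> fin_cases k <;> simp [Nm, dNm] <;>
    simp (disch := fun_prop) only [pd_add', pd_sub', pd_neg', pd_mul', pd_const'] <;> ring

lemma core (c : ℝ) (ha : DifferentiableAt ℝ a x) (hb : DifferentiableAt ℝ b x)
    (hd : DifferentiableAt ℝ d x) (hp : DifferentiableAt ℝ p x) (hq : DifferentiableAt ℝ q x)
    (hD : 0 < a x * d x - b x * b x) (hd0 : d x ≠ 0)
    (hz : pd 2 (fun y => a y * d y - b y * b y) x = 0) (hp2 : pd 2 p x = 0) (hq2 : pd 2 q x = 0)
    (i : Fin 3) :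
    covDivUp (fun y => Gm (a y) (b y) (d y) (p y) (q y))
      (fun y => Tm c (a y) (b y) (d y) (p y) (q y)) i x = 0 := by
  have dD : DifferentiableAt ℝ (fun y => a y * d y - b y * b y) x := by fun_prop
  have pD : ∀ j, pd j (fun y => a y * d y - b y * b y) x =
      a x * pd j d x + d x * pd j a x - 2 * b x * pd j b x := fun j => by
    simp (disch := fun_prop) only [pd_sub', pd_mul']; ring
  have dN := diff_Nm ha hb hd hp hq
  have dDi : DifferentiableAt ℝ (fun y => (a y * d y - b y * b y)⁻¹) x := dD.inv hD.ne'
  have pT : ∀ j l k, pd j (fun y => Tm c (a y) (b y) (d y) (p y) (q y) l k) x =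
      c * (-(1/3) * ((a x * d x - b x * b x)⁻¹ *
        dNm (a x) (b x) (d x) (p x) (q x) (pd j a x) (pd j b x) (pd j d x) (pd j p x) (pd j q x) l k
        - Nm (a x) (b x) (d x) (p x) (q x) l k *
          (a x * pd j d x + d x * pd j a x - 2 * b x * pd j b x) / (a x * d x - b x * b x)^2)) := by
    intro j l k
    simp only [Tm, Matrix.of_apply]
    have dND := dDi.fun_mul (dN l k)
    rw [pd_mul' j (differentiableAt_const c)
        ((differentiableAt_const (dl l k)).fun_sub (dND.const_mul (1 / 3))),
      pd_sub' j (differentiableAt_const (dl l k)) (dND.const_mul (1 / 3)),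
      pd_mul' j (differentiableAt_const (1 / 3 : ℝ)) dND,
      pd_mul' j dDi (dN l k), pd_inv' j dD hD.ne', pD, pd_Nm ha hb hd hp hq]
    simp only [pd_const']
    ring
  have dT : ∀ l k, DifferentiableAt ℝ (fun y => Tm c (a y) (b y) (d y) (p y) (q y) l k) x := by
    intro l k
    simp only [Tm, Matrix.of_apply]
    exact (((differentiableAt_const _).sub ((dDi.fun_mul (dN l k)).const_mul _))).const_mul _
  rw [pD] at hz
  have ha2 : pd 2 a x = (2 * b x * pd 2 b x - a x * pd 2 d x) / d x := by
    field_simp; linarith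
  simp only [covDivUp, christoffel, sqrtDet, Gm_det, Finset.mul_sum,
    fun j => pd_weight j dD (dT i j) hD, pT, pD, pd_Gm ha hb hd hp hq, Gm_inv _ _ _ _ _ hD.ne']
  have hD' := hD.ne'
  simp only [Fin.sum_univ_three, hp2, hq2, ha2]
  generalize pd 0 a x = a0, pd 0 b x = b0, pd 0 d x = d0, pd 0 p x = p0, pd 0 q x = q0,
    pd 1 a x = a1, pd 1 b x = b1, pd 1 d x = d1, pd 1 p x = p1, pd 1 q x = q1,
    pd 2 b x = b2, pd 2 d x = d2, a x = A, b x = B, d x = E, p x = P, q x = Q at *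
  clear hz ha2 pT dT pD dN dDi dD
  fin_cases i <;> simp [dGm, dNm, Nm, Tm, dl] <;> field_simp <;> ring

end

lemma pd2_zero {f : V3 → ℝ} (hf : ∀ x t, f (Function.update x 2 t) = f x) {x : V3}
    (hd : DifferentiableAt ℝ f x) : pd 2 f x = 0 := by
  unfold pd
  rw [← hd.lineDeriv_eq_fderiv, lineDeriv]
  have : (fun t : ℝ => f (x + t • Pi.single 2 1)) = fun _ => f x := by
    funext t
    rw [← hf x (x 2 + t)]
    congr 1
    ext k
    fin_cases k <;> simp [Function.update, Pi.single_apply]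
  rw [this]; simp

/-- **Corollary 3.2**: for the metric `g = (dz + β₁dx¹ + β₂dx²)² + h_{ab} dx^a dx^b` with
`β₁, β₂` independent of `z = x³` and `∂_z det(h_{ab}) = 0`, the tensor
`T^{ij} = c (δ^i_z δ^j_z - (1/3) g^{ij})` is trace-free and satisfies the momentum
constraint `∇_j T^{ij} = 0`. -/
theorem momentum_constraint_corollary32
    (U : Set V3) (hU : IsOpen U)
    (h : V3 → Matrix (Fin 2) (Fin 2) ℝ) (β₁ β₂ : V3 → ℝ) (c : ℝ)
    (hh_smooth : ∀ a b, ContDiffOn ℝ (⊤ : ℕ∞) (fun x => h x a b) U)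
    (hh_pos : ∀ x ∈ U, (h x).PosDef)
    (hh_det : ∀ x ∈ U, pd 2 (fun y => (h y).det) x = 0)
    (hβ₁_smooth : ContDiffOn ℝ (⊤ : ℕ∞) β₁ U)
    (hβ₂_smooth : ContDiffOn ℝ (⊤ : ℕ∞) β₂ U)
    (hβ₁_ind : ∀ x t, β₁ (Function.update x 2 t) = β₁ x)
    (hβ₂_ind : ∀ x t, β₂ (Function.update x 2 t) = β₂ x) :
    let g : V3 → Matrix (Fin 3) (Fin 3) ℝ := fun x =>
      !![h x 0 0 + β₁ x * β₁ x, h x 0 1 + β₁ x * β₂ x, β₁ x;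
         h x 1 0 + β₂ x * β₁ x, h x 1 1 + β₂ x * β₂ x, β₂ x;
         β₁ x, β₂ x, 1]
    let T : V3 → Matrix (Fin 3) (Fin 3) ℝ := fun x =>
      Matrix.of fun i j =>
        c * ((if i = 2 ∧ j = 2 then 1 else 0) - (1 / 3) * (g x)⁻¹ i j)
    (∀ x ∈ U, ∑ i, ∑ j, g x i j * T x i j = 0) ∧
    (∀ i, ∀ x ∈ U, covDivUp g T i x = 0) := by
  intro g T
  have key : ∀ x ∈ U, g x = Gm (h x 0 0) (h x 0 1) (h x 1 1) (β₁ x) (β₂ x) ∧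
      0 < h x 0 0 * h x 1 1 - h x 0 1 * h x 0 1 ∧ 0 < h x 1 1 ∧
      T x = Tm c (h x 0 0) (h x 0 1) (h x 1 1) (β₁ x) (β₂ x) ∧
      (h x).det = h x 0 0 * h x 1 1 - h x 0 1 * h x 0 1 := by
    intro x hx
    have hs : h x 1 0 = h x 0 1 := by
      have := (hh_pos x hx).isHermitian.apply 0 1
      simpa using this
    have hdet : (h x).det = h x 0 0 * h x 1 1 - h x 0 1 * h x 0 1 := by
      rw [Matrix.det_fin_two, hs]
    have h1 : g x = Gm (h x 0 0) (h x 0 1) (h x 1 1) (β₁ x) (β₂ x) := by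
      simp only [g, Gm, hs]
    have h2 : 0 < h x 0 0 * h x 1 1 - h x 0 1 * h x 0 1 := hdet ▸ (hh_pos x hx).det_pos
    refine ⟨h1, h2, (hh_pos x hx).diag_pos, ?_, hdet⟩
    ext i j
    simp only [T, h1, Gm_inv _ _ _ _ _ h2.ne', Tm, dl, Matrix.of_apply]
  constructor
  · intro x hx
    obtain ⟨h1, h2, h3, h4, -⟩ := key x hx
    rw [h1, h4]
    have h2' : h x 0 0 * h x 1 1 - h x 0 1 ^ 2 ≠ 0 := by rw [pow_two]; exact h2.ne'
    simp [Fin.sum_univ_three, Gm, Tm, Nm, dl]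
    field_simp
    ring
  · intro i x hx
    have hn : U ∈ 𝓝 x := hU.mem_nhds hx
    have dh : ∀ a b, DifferentiableAt ℝ (fun x => h x a b) x := fun a b =>
      ((hh_smooth a b).contDiffAt hn).differentiableAt (by simp)
    have d1 : DifferentiableAt ℝ β₁ x := (hβ₁_smooth.contDiffAt hn).differentiableAt (by simp)
    have d2 : DifferentiableAt ℝ β₂ x := (hβ₂_smooth.contDiffAt hn).differentiableAt (by simp)
    rw [covDivUp_congr (g' := fun x => Gm (h x 0 0) (h x 0 1) (h x 1 1) (β₁ x) (β₂ x))
      (T' := fun x => Tm c (h x 0 0) (h x 0 1) (h x 1 1) (β₁ x) (β₂ x))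
      (by filter_upwards [hn] with y hy using (key y hy).1)
      (by filter_upwards [hn] with y hy using (key y hy).2.2.2.1)]
    refine core c (dh 0 0) (dh 0 1) (dh 1 1) d1 d2 (key x hx).2.1 (key x hx).2.2.1.ne' ?_
      (pd2_zero hβ₁_ind d1) (pd2_zero hβ₂_ind d2) i
    rw [← hh_det x hx]
    apply pd_congr
    filter_upwards [hn] with y hy using (key y hy).2.2.2.2.symm
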